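/- Let N ⊴ G be finite groups with N a p'-group, P a p-subgroup of G with K := NP ⊴ G, and μ ∈ Irr(N) G-invariant with canonical extension μ^◇ to K. Then μ extends to G if and only if μ^◇ extends to G. -/

import Mathlib

open scoped BigOperators Classical

namespace CTC

noncomputable def cfInner (G : Type) [Group G] [Fintype G] (φ ψ : G → ℂ) : ℂ :=
  (Fintype.card G : ℂ)⁻¹ * ∑ g : G, φ g * star (ψ g)

def IsChar (G : Type) [Group G] [Fintype G] (χ : G → ℂ) : Prop :=
  ∃ (n : ℕ) (ρ : Representation ℂ G (Fin n → ℂ)),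
    ∀ g : G, χ g = LinearMap.trace ℂ (Fin n → ℂ) (ρ g)

def IsIrrChar (G : Type) [Group G] [Fintype G] (χ : G → ℂ) : Prop :=
  IsChar G χ ∧ cfInner G χ χ = 1

def Invariant {G : Type} [Group G] (N : Subgroup G) (ϑ : ↥N → ℂ) : Prop :=
  ∀ (g n : G) (h1 : n ∈ N) (h2 : g * n * g⁻¹ ∈ N),
    ϑ ⟨g * n * g⁻¹, h2⟩ = ϑ ⟨n, h1⟩

/-- The order `o(χ)` of the determinantal (linear) character of a representation. -/
noncomputable def detOrder {H : Type} [Group H] {n : ℕ}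
    (ρ : Representation ℂ H (Fin n → ℂ)) : ℕ :=
  orderOf (MonoidHom.comp LinearMap.det ρ)

/-- `μd ∈ Irr(H)` is the canonical extension of `μ ∈ Irr(K)`, `K ≤ H`: it extends
`μ` and the order of its determinantal character is coprime to `|H : K|`. -/
def IsCanonicalExtensionOn {G : Type} [Group G] [Fintype G] (H K : Subgroup G)
    (hKH : K ≤ H) (μ : ↥K → ℂ) (μd : ↥H → ℂ) : Prop :=
  (∀ x : ↥K, μd ⟨x.1, hKH x.2⟩ = μ x) ∧
  ∃ (n : ℕ) (ρ : Representation ℂ ↥H (Fin n → ℂ)),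
    (∀ h : ↥H, μd h = LinearMap.trace ℂ (Fin n → ℂ) (ρ h)) ∧
    Nat.Coprime (detOrder ρ) (K.subgroupOf H).index

/-!
Let `ρ` afford `μ^◇` and suppose a representation `σ` of `G` affords an extension of `μ`. Restricted
to `N`, both are irreducible with character `μ`, so by Schur's lemma `ρ ≅ λ ⊗ σ|_K` for a linear
character `λ` of `K / N`, and `λ ^ |K : N| = 1`. With `d` the order of `det ρ`, taking determinants
gives `λ ^ (μ(1) d) = (det σ|_K) ^ (-d)`. Both `d` and `μ(1)`, a divisor of `|N|`, are coprime to
`|K : N|`, so `λ` is a power of `det σ|_K`, and the same power of `det σ` twists `σ` to an extension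
of `μ^◇`.
-/

open Module Representation

section Eigenbasis

variable {k V : Type*} [Field k] [AddCommGroup V] [Module k V]

theorem exists_basis_forall_apply_eq_smul [FiniteDimensional k V] [IsAlgClosed k] {f : End k V}
    {n : ℕ} (hn : (n : k) ≠ 0) (hf : f ^ n = 1) :
    ∃ (b : Basis (Fin (finrank k V)) k V) (c : Fin (finrank k V) → k),
      ∀ i, f (b i) = c i • b i := by
  have hsq : Squarefree (Polynomial.X ^ n - 1 : Polynomial k) :=
    (Polynomial.separable_X_pow_sub_C (1 : k) hn one_ne_zero).squarefree
  have hss : f.IsSemisimple := End.isSemisimple_of_squarefree_aeval_eq_zero hsq (by simp [hf])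
  have hint : DirectSum.IsInternal f.eigenspace :=
    DirectSum.isInternal_submodule_of_iSupIndep_of_iSup_eq_top f.eigenspaces_iSupIndep
      hss.iSup_eigenspace_eq_top
  let b := hint.collectedBasis fun a ↦ finBasis k (f.eigenspace a)
  have : Finite ((a : k) × Fin (finrank k (f.eigenspace a))) := Module.Finite.finite_basis b
  have := Fintype.ofFinite ((a : k) × Fin (finrank k (f.eigenspace a)))
  let e := Fintype.equivFinOfCardEq (finrank_eq_card_basis b).symm
  refine ⟨b.reindex e, fun i ↦ (e.symm i).1, fun i ↦ ?_⟩
  rw [Basis.reindex_apply]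
  exact End.mem_eigenspace_iff.mp (hint.collectedBasis_mem _ _)

theorem trace_eq_sum_of_apply_eq_smul {R M ι : Type*} [CommRing R] [AddCommGroup M] [Module R M]
    [Fintype ι] (b : Basis ι R M) {f : End R M} {c : ι → R} (h : ∀ i, f (b i) = c i • b i) :
    LinearMap.trace R M f = ∑ i, c i := by
  rw [LinearMap.trace_eq_matrix_trace R b, Matrix.trace]
  simp [LinearMap.toMatrix_apply, h]

end Eigenbasis

section CharacterValues

variable {G k V : Type*} [Group G] [Field k] [AddCommGroup V] [Module k V]
  [FiniteDimensional k V]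

theorem exists_character_eq_sum_rootsOfUnity [IsAlgClosed k] (ρ : Representation k G V) {g : G}
    (hg : (orderOf g : k) ≠ 0) :
    ∃ c : Fin (finrank k V) → k, (∀ i, c i ^ orderOf g = 1) ∧
      ρ.character g = ∑ i, c i ∧ ρ.character g⁻¹ = ∑ i, (c i)⁻¹ := by
  have hpow : ρ g ^ orderOf g = 1 := by rw [← map_pow, pow_orderOf_eq_one, map_one]
  obtain ⟨b, c, hbc⟩ := exists_basis_forall_apply_eq_smul hg hpow
  have hc (i) : c i ^ orderOf g = 1 := by
    have hbi : End.HasEigenvector (ρ g) (c i) (b i) :=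
      ⟨End.mem_eigenspace_iff.mpr (hbc i), b.ne_zero i⟩
    have := hbi.pow_apply (orderOf g)
    rw [hpow, End.one_apply] at this
    exact smul_left_injective k (b.ne_zero i) (by simpa using this.symm)
  refine ⟨c, hc, trace_eq_sum_of_apply_eq_smul b hbc,
    trace_eq_sum_of_apply_eq_smul b fun i ↦ ?_⟩
  have hci : c i ≠ 0 := fun h ↦ hg <| by
    have : orderOf g = 0 := by simpa [h, zero_pow_eq] using hc i
    simp [this]
  rw [eq_inv_smul_iff₀ hci, ← map_smul, ← hbc, inv_self_apply]

theorem isIntegral_character [IsAlgClosed k] (ρ : Representation k G V) {g : G}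
    (hg : (orderOf g : k) ≠ 0) : IsIntegral ℤ (ρ.character g) := by
  obtain ⟨c, hc, hρ, -⟩ := exists_character_eq_sum_rootsOfUnity ρ hg
  have hpos : 0 < orderOf g := Nat.pos_of_ne_zero fun h ↦ hg (by simp [h])
  rw [hρ]
  exact IsIntegral.sum _ fun i _ ↦ IsIntegral.of_pow hpos (hc i ▸ isIntegral_one)

theorem character_inv_eq_star {V : Type*} [AddCommGroup V] [Module ℂ V] [FiniteDimensional ℂ V]
    (ρ : Representation ℂ G V) {g : G} (hg : IsOfFinOrder g) :
    ρ.character g⁻¹ = star (ρ.character g) := by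
  have hg0 : orderOf g ≠ 0 := hg.orderOf_pos.ne'
  obtain ⟨c, hc, hρ, hinv⟩ := exists_character_eq_sum_rootsOfUnity ρ (Nat.cast_ne_zero.mpr hg0)
  rw [hρ, hinv, star_sum]
  exact Finset.sum_congr rfl fun i _ ↦
    Complex.inv_eq_conj (Complex.norm_eq_one_of_pow_eq_one (hc i) hg0)

end CharacterValues

section Irreducibility

open scoped MonoidAlgebra

theorem isSimpleModule_of_finrank_end_eq_one {k A M : Type*} [Field k] [Ring A] [Algebra k A]
    [AddCommGroup M] [Module k M] [Module A M] [IsScalarTower k A M] [IsSemisimpleModule A M]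
    (h : finrank k (End A M) = 1) : IsSimpleModule A M := by
  have hnt : Nontrivial (End A M) := nontrivial_of_finrank_pos (R := k) (by omega)
  have : Nontrivial M := by
    by_contra hM
    rw [not_nontrivial_iff_subsingleton] at hM
    exact not_subsingleton (End A M) inferInstance
  obtain ⟨m, hm⟩ := IsSemisimpleModule.exists_simple_submodule A M
  obtain ⟨q, hq⟩ := exists_isCompl m
  obtain ⟨c, hc⟩ := (finrank_eq_one_iff_of_nonzero' (1 : End A M) one_ne_zero).mp h
    (m.projection q hq)
  have hc0 : c ≠ 0 := by
    rintro rfl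
    have hbot : m = ⊥ := by rw [← m.range_projection hq, ← hc, zero_smul, LinearMap.range_zero]
    exact (isSimpleModule_iff_isAtom.mp hm).1 hbot
  have htop : m = ⊤ := by
    rw [← m.range_projection hq, ← hc, LinearMap.range_eq_top]
    exact fun v ↦ ⟨c⁻¹ • v, by simp [smul_inv_smul₀ hc0]⟩
  exact (LinearEquiv.ofTop m htop).isSimpleModule_iff.mp hm

variable {G k V W : Type*} [Group G] [Field k] [AddCommGroup V] [Module k V]
  [AddCommGroup W] [Module k W]

theorem isIrreducible_of_sum_character_mul_character_inv_eq_card [Fintype G] [CharZero k]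
    [FiniteDimensional k V] {ρ : Representation k G V}
    (h : ∑ g, ρ.character g * ρ.character g⁻¹ = Nat.card G) : IsIrreducible ρ := by
  have : Invertible (Nat.card G : k) := invertibleOfNonzero (NeZero.ne _)
  have hone : finrank k (IntertwiningMap ρ ρ) = 1 := by
    have := card_inv_mul_sum_char_mul_char_eq_finrank ρ ρ
    rw [h, inv_mul_cancel₀ (NeZero.ne _)] at this
    exact_mod_cast this.symm
  have : IsSemisimpleModule k[G] ρ.asModule :=
    (isSemisimpleRepresentation_iff_isSemisimpleModule_asModule ρ).mp inferInstance
  rw [irreducible_iff_isSimpleModule_asModule]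
  refine isSimpleModule_of_finrank_end_eq_one (k := k) ?_
  rw [← (IntertwiningMap.equivAlgEnd ρ).toLinearEquiv.finrank_eq, hone]

theorem nonempty_equiv_of_character_eq [Finite G] [CharZero k] [IsAlgClosed k]
    [FiniteDimensional k V] [FiniteDimensional k W] {ρ : Representation k G V}
    {σ : Representation k G W} [IsIrreducible ρ] [IsIrreducible σ]
    (h : ρ.character = σ.character) : Nonempty (ρ.Equiv σ) := by
  have := Fintype.ofFinite G
  have : Invertible (Nat.card G : k) := invertibleOfNonzero (NeZero.ne _)
  by_contra hne
  have hself := char_orthonormal ρ ρ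
  rw [if_pos ⟨.refl ρ⟩] at hself
  have hcross := char_orthonormal σ ρ
  rw [if_neg hne, ← h, hself] at hcross
  exact one_ne_zero hcross

theorem nontrivial_of_isIrreducible (ρ : Representation k G V) [IsIrreducible ρ] :
    Nontrivial V :=
  IsSimpleModule.nontrivial k[G] ρ.asModule

theorem exists_eq_smul_of_equiv [IsAlgClosed k] [FiniteDimensional k V]
    {ρ : Representation k G V} {σ : Representation k G W} [IsIrreducible ρ] (φ : ρ.Equiv σ)
    (f : IntertwiningMap ρ σ) : ∃ c : k, ∀ v, f v = c • φ v := by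
  obtain ⟨c, hc⟩ := (IsIrreducible.algebraMap_intertwiningMap_bijective_of_isAlgClosed).2
    (φ.symm.toIntertwiningMap.comp f)
  refine ⟨c, fun v ↦ ?_⟩
  have hv : c • v = φ.symm (f v) := congr($hc v)
  rw [← map_smul, hv, φ.apply_symm_apply]

end Irreducibility

section DegreeDivides

variable {G k V : Type*} [Field k] [AddCommGroup V] [Module k V]

theorem exists_sum_smul_eq_smul_one [Group G] [Fintype G] [IsAlgClosed k] [FiniteDimensional k V]
    (ρ : Representation k G V) [IsIrreducible ρ] {φ : G → k}
    (hφ : ∀ g x, φ (x * g * x⁻¹) = φ g) : ∃ c : k, ∑ g, φ g • ρ g = c • 1 := by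
  have hcomm (x : G) : (∑ g, φ g • ρ g) * ρ x = ρ x * ∑ g, φ g • ρ g := by
    simp only [Finset.sum_mul, Finset.mul_sum, smul_mul_assoc, mul_smul_comm, ← map_mul]
    refine Fintype.sum_equiv (MulAut.conj x⁻¹).toEquiv _ _ fun g ↦ ?_
    have hconj : (MulAut.conj x⁻¹).toEquiv g = x⁻¹ * g * x⁻¹⁻¹ := rfl
    rw [hconj, hφ]
    simp [mul_assoc]
  obtain ⟨c, hc⟩ := exists_eq_smul_of_equiv (.refl ρ) ⟨∑ g, φ g • ρ g, hcomm⟩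
  exact ⟨c, LinearMap.ext hc⟩

theorem isIntegral_of_sum_smul_eq_smul_one {R : Type*} [CommRing R] [Algebra R k] [Monoid G]
    [Fintype G] [Nontrivial V] (ρ : Representation k G V) {φ : G → k}
    (hφ : ∀ g, IsIntegral R (φ g)) {c : k} (h : ∑ g, φ g • ρ g = c • 1) : IsIntegral R c := by
  let A := integralClosure R k
  let z : MonoidAlgebra A G := ∑ g, MonoidAlgebra.single g ⟨φ g, hφ g⟩
  have hz : MonoidAlgebra.lift A (End k V) G ρ z = algebraMap k (End k V) c := by
    rw [Algebra.algebraMap_eq_smul_one, ← h, map_sum]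
    exact Finset.sum_congr rfl fun g _ ↦ MonoidAlgebra.lift_single _ _ _
  have hend : IsIntegral A (algebraMap k (End k V) c) := by
    rw [← hz]
    exact (Algebra.IsIntegral.isIntegral z).map (MonoidAlgebra.lift A (End k V) G ρ)
  have hA : IsIntegral A c :=
    (isIntegral_algebraMap_iff (FaithfulSMul.algebraMap_injective k (End k V))).mp hend
  exact isIntegral_trans c hA

theorem natCast_dvd_of_isIntegral [CharZero k] {m n : ℕ} {c : k} (hc : IsIntegral ℤ c)
    (h : c * n = m) : n ∣ m := by
  rcases eq_or_ne n 0 with rfl | hn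
  · simpa [eq_comm] using h
  have hn' : (n : k) ≠ 0 := Nat.cast_ne_zero.mpr hn
  have hrat : IsIntegral ℤ ((m : ℚ) / n) := by
    refine (isIntegral_algebraMap_iff (algebraMap ℚ k).injective).mp ?_
    rwa [map_div₀, map_natCast, map_natCast, ← h, mul_div_cancel_right₀ _ hn']
  obtain ⟨y, hy⟩ := IsIntegrallyClosed.algebraMap_eq_of_integral hrat
  rw [eq_div_iff (Nat.cast_ne_zero.mpr hn), eq_intCast] at hy
  exact Int.natCast_dvd_natCast.mp ⟨y, by rw [mul_comm]; exact_mod_cast hy.symm⟩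

theorem finrank_dvd_card_of_isIrreducible [Group G] [Finite G] [CharZero k] [IsAlgClosed k]
    [FiniteDimensional k V] (ρ : Representation k G V) [IsIrreducible ρ] :
    finrank k V ∣ Nat.card G := by
  have := Fintype.ofFinite G
  have : Nontrivial V := nontrivial_of_isIrreducible ρ
  have : Invertible (Nat.card G : k) := invertibleOfNonzero (NeZero.ne _)
  obtain ⟨c, hc⟩ := exists_sum_smul_eq_smul_one ρ (φ := fun g ↦ ρ.character g⁻¹) fun g x ↦ by
    rw [← char_conj ρ g⁻¹ x, mul_inv_rev, mul_inv_rev, inv_inv, mul_assoc]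
  have hint : IsIntegral ℤ c := isIntegral_of_sum_smul_eq_smul_one ρ
    (fun g ↦ isIntegral_character ρ (Nat.cast_ne_zero.mpr (orderOf_pos g⁻¹).ne')) hc
  have hnorm : ∑ g, ρ.character g⁻¹ * ρ.character g = Nat.card G := by
    have := char_orthonormal ρ ρ
    rw [if_pos ⟨.refl ρ⟩, inv_mul_eq_one₀ (NeZero.ne _)] at this
    simp only [this, mul_comm]
  refine natCast_dvd_of_isIntegral hint ?_
  calc c * finrank k V = LinearMap.trace k V (c • 1) := by
        rw [map_smul, LinearMap.trace_one, smul_eq_mul]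
    _ = ∑ g, ρ.character g⁻¹ * ρ.character g := by
        rw [← hc, map_sum]; simp only [map_smul, smul_eq_mul, character]
    _ = Nat.card G := hnorm

end DegreeDivides

section DetChar

variable {k K V W : Type*} [CommRing k] [Group K] [AddCommGroup V] [Module k V]
  [AddCommGroup W] [Module k W]

/-- The tensor product `χ ⊗ ρ` with a linear character `χ`, realised on the space of `ρ`. -/
def twist (χ : K →* kˣ) (ρ : Representation k K V) : Representation k K V where
  toFun g := χ g • ρ g
  map_one' := by simp
  map_mul' g h := by simp [smul_mul_smul_comm]

theorem twist_apply (χ : K →* kˣ) (ρ : Representation k K V) (g : K) :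
    twist χ ρ g = χ g • ρ g :=
  rfl

/-- The determinantal character `det ρ`. It takes values in the units of `k` so that it has
integer powers. -/
noncomputable def detChar (ρ : Representation k K V) : K →* kˣ :=
  (LinearMap.det.comp ρ).toHomUnits

theorem coe_detChar_apply (ρ : Representation k K V) (g : K) :
    (detChar ρ g : k) = LinearMap.det (ρ g) :=
  rfl

theorem detChar_twist [Module.Free k V] (χ : K →* kˣ) (ρ : Representation k K V) :
    detChar (twist χ ρ) = χ ^ finrank k V * detChar ρ := by
  ext g
  simp [coe_detChar_apply, twist_apply, Units.smul_def]

theorem detChar_comp {H : Type*} [Group H] (ρ : Representation k K V) (f : H →* K) :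
    detChar (ρ.comp f) = (detChar ρ).comp f := by
  ext g
  rfl

theorem detChar_eq_of_equiv {ρ : Representation k K V} {σ : Representation k K W}
    (φ : ρ.Equiv σ) : detChar ρ = detChar σ := by
  ext g
  rw [coe_detChar_apply, coe_detChar_apply, ← Equiv.conj_apply_self g φ]
  exact (LinearMap.det_conj (ρ g) φ.toLinearEquiv).symm

end DetChar

section Powers

variable {K A : Type*} [Group K] [CommGroup A]

theorem pow_index_eq_one_of_le_ker {H : Subgroup K} [H.Normal] {χ : K →* A}
    (h : H ≤ χ.ker) : χ ^ H.index = 1 := by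
  ext g
  rw [MonoidHom.pow_apply, ← map_pow, MonoidHom.one_apply]
  exact h (H.pow_index_mem g)

theorem exists_eq_zpow_of_pow_mul_pow_eq_one {x y : A} {m n d : ℕ} (hx : x ^ m = 1)
    (hn : n.Coprime m) (hd : d.Coprime m) (h : (x ^ n * y) ^ d = 1) : ∃ s : ℤ, x = y ^ s := by
  have hcop : (n * d).Coprime (orderOf x) :=
    (hn.mul_left hd).coprime_dvd_right (orderOf_dvd_of_pow_eq_one hx)
  obtain ⟨a, ha⟩ := exists_pow_eq_self_of_coprime hcop
  have hy : x ^ (n * d) = (y ^ d)⁻¹ := by rwa [mul_pow, ← pow_mul, mul_eq_one_iff_eq_inv] at h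
  refine ⟨-(d * a), ?_⟩
  rw [zpow_neg, zpow_mul, zpow_natCast, zpow_natCast, ← inv_pow, ← hy, ha]

end Powers

section Twist

variable {k K V W : Type*} [Field k] [Group K] [AddCommGroup V] [Module k V]
  [AddCommGroup W] [Module k W]

theorem exists_monoidHom_of_forall_exists_eq_smul [Nontrivial V] {σ : Representation k K V}
    {ρ : Representation k K W} {φ : V ≃ₗ[k] W}
    (h : ∀ g, ∃ c : k, ∀ v, ρ g (φ v) = c • φ (σ g v)) :
    ∃ χ : K →* kˣ, ∀ g v, ρ g (φ v) = χ g • φ (σ g v) := by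
  choose c hc using h
  obtain ⟨v, hv⟩ := exists_ne (0 : V)
  have hφ : φ v ≠ 0 := by simpa using hv
  have hone : c 1 = 1 := smul_left_injective k hφ (by simpa using (hc 1 v).symm)
  have hmul (g h : K) : c (g * h) = c g * c h := by
    have hne : φ (σ (g * h) v) ≠ 0 := by
      simpa using (apply_bijective σ (g * h)).injective.ne hv
    refine smul_left_injective k hne ?_
    calc c (g * h) • φ (σ (g * h) v) = ρ g (ρ h (φ v)) := by rw [← hc, map_mul, End.mul_apply]
      _ = (c h * c g) • φ (σ g (σ h v)) := by rw [hc, map_smul, hc, smul_smul]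
      _ = (c g * c h) • φ (σ (g * h) v) := by rw [mul_comm, map_mul, End.mul_apply]
  let χ : K →* k := { toFun := c, map_one' := hone, map_mul' := hmul }
  exact ⟨χ.toHomUnits, hc⟩

variable {N : Type*} [Group N] {i : N →* K} [hi : i.range.Normal]

theorem exists_apply_eq_smul_of_equiv_comp [IsAlgClosed k] [FiniteDimensional k V]
    {σ : Representation k K V} {ρ : Representation k K W} [IsIrreducible (σ.comp i)]
    (φ : Equiv (σ.comp i) (ρ.comp i)) (g : K) : ∃ c : k, ∀ v, ρ g (φ v) = c • φ (σ g v) := by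
  let f : V →ₗ[k] W := ρ g ∘ₗ φ.toLinearMap ∘ₗ σ g⁻¹
  have hf (n : N) : f ∘ₗ σ.comp i n = ρ.comp i n ∘ₗ f := by
    obtain ⟨m, hm⟩ := hi.conj_mem (i n) ⟨n, rfl⟩ g⁻¹
    have hσ : g⁻¹ * i n = i m * g⁻¹ := by rw [hm]; group
    have hρ : g * i m = i n * g := by rw [hm]; group
    ext v
    calc ρ g (φ (σ g⁻¹ (σ (i n) v))) = ρ g (φ (σ (i m) (σ g⁻¹ v))) := by
          rw [← End.mul_apply, ← map_mul, hσ, map_mul, End.mul_apply]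
      _ = ρ g (ρ (i m) (φ (σ g⁻¹ v))) :=
          congr(ρ g $(IntertwiningMap.isIntertwining _ _ φ.toIntertwiningMap m _))
      _ = ρ (i n) (ρ g (φ (σ g⁻¹ v))) := by
          rw [← End.mul_apply, ← map_mul, hρ, map_mul, End.mul_apply]
  obtain ⟨c, hc⟩ := exists_eq_smul_of_equiv φ ⟨f, hf⟩
  refine ⟨c, fun v ↦ ?_⟩
  rw [← hc]
  simp [f]

theorem exists_twist_equiv_of_equiv_comp [IsAlgClosed k] [FiniteDimensional k V]
    {σ : Representation k K V} {ρ : Representation k K W} [IsIrreducible (σ.comp i)]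
    (φ : Equiv (σ.comp i) (ρ.comp i)) :
    ∃ χ : K →* kˣ, i.range ≤ χ.ker ∧ Nonempty ((twist χ σ).Equiv ρ) := by
  have : Nontrivial V := nontrivial_of_isIrreducible (σ.comp i)
  obtain ⟨χ, hχ⟩ := exists_monoidHom_of_forall_exists_eq_smul (φ := φ.toLinearEquiv)
    (exists_apply_eq_smul_of_equiv_comp φ)
  refine ⟨χ, ?_, ⟨.mk φ.toLinearEquiv fun g ↦ ?_⟩⟩
  · rintro _ ⟨n, rfl⟩
    obtain ⟨v, hv⟩ := exists_ne (0 : V)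
    have hne : φ (σ (i n) v) ≠ 0 := by simpa using (apply_bijective σ (i n)).injective.ne hv
    have hone : (χ (i n) : k) • φ (σ (i n) v) = (1 : k) • φ (σ (i n) v) := by
      rw [one_smul]
      exact (hχ (i n) v).symm.trans
        (IntertwiningMap.isIntertwining _ _ φ.toIntertwiningMap n v).symm
    exact Units.ext (smul_left_injective k hne hone)
  · ext v
    exact (map_smul φ (χ g : k) (σ g v)).trans (hχ g v).symm

theorem exists_twist_detChar_zpow_equiv [IsAlgClosed k] [FiniteDimensional k V]
    {σ : Representation k K V} {ρ : Representation k K W} [IsIrreducible (σ.comp i)]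
    (φ : Equiv (σ.comp i) (ρ.comp i)) (hdim : (finrank k V).Coprime i.range.index)
    (hdet : (orderOf (detChar ρ)).Coprime i.range.index) :
    ∃ s : ℤ, Nonempty ((twist (detChar σ ^ s) σ).Equiv ρ) := by
  obtain ⟨χ, hχ, ⟨ψ⟩⟩ := exists_twist_equiv_of_equiv_comp φ
  have hpow : (χ ^ finrank k V * detChar σ) ^ orderOf (detChar ρ) = 1 := by
    rw [← detChar_twist, detChar_eq_of_equiv ψ, pow_orderOf_eq_one]
  obtain ⟨s, rfl⟩ :=
    exists_eq_zpow_of_pow_mul_pow_eq_one (pow_index_eq_one_of_le_ker hχ) hdim hdet hpow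
  exact ⟨s, ⟨ψ⟩⟩

theorem exists_comp_equiv_of_equiv_comp_comp [IsAlgClosed k] [FiniteDimensional k V]
    {G : Type*} [Group G] {j : K →* G} {σ : Representation k G V} {ρ : Representation k K W}
    [IsIrreducible ((σ.comp j).comp i)] (φ : Equiv ((σ.comp j).comp i) (ρ.comp i))
    (hdim : (finrank k V).Coprime i.range.index)
    (hdet : (orderOf (detChar ρ)).Coprime i.range.index) :
    ∃ τ : Representation k G V, Nonempty (Equiv (τ.comp j) ρ) := by
  obtain ⟨s, hs⟩ := exists_twist_detChar_zpow_equiv (σ := σ.comp j) φ hdim hdet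
  have hres : (detChar σ ^ s).comp j = (detChar σ).comp j ^ s :=
    map_zpow (MonoidHom.compHom' j) (detChar σ) s
  rw [detChar_comp, ← hres] at hs
  exact ⟨twist (detChar σ ^ s) σ, hs⟩

end Twist

section Characters

theorem orderOf_detChar {H : Type} [Group H] {n : ℕ} (ρ : Representation ℂ H (Fin n → ℂ)) :
    orderOf (detChar ρ) = detOrder ρ := by
  refine orderOf_eq_orderOf_iff.mpr fun m ↦ ?_
  simp only [MonoidHom.ext_iff, Units.ext_iff]
  rfl

theorem IsIrrChar.isIrreducible {G : Type} [Group G] [Fintype G] {χ : G → ℂ}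
    (hχ : IsIrrChar G χ) {V : Type*} [AddCommGroup V] [Module ℂ V] [FiniteDimensional ℂ V]
    {ρ : Representation ℂ G V} (hρ : ρ.character = χ) : IsIrreducible ρ := by
  refine isIrreducible_of_sum_character_mul_character_inv_eq_card ?_
  have hinner : (Nat.card G : ℂ)⁻¹ * ∑ g, χ g * star (χ g) = 1 := by
    rw [Nat.card_eq_fintype_card]
    exact hχ.2
  simp only [character_inv_eq_star ρ (isOfFinOrder_of_finite _), hρ]
  exact ((inv_mul_eq_one₀ (NeZero.ne _)).mp hinner).symm

theorem IsIrrChar.exists_apply_one_eq_natCast_dvd_card {G : Type} [Group G] [Fintype G] {χ : G → ℂ}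
    (hχ : IsIrrChar G χ) : ∃ n : ℕ, χ 1 = n ∧ n ∣ Nat.card G := by
  obtain ⟨n, ρ, hρ⟩ := hχ.1
  obtain rfl : χ = ρ.character := funext hρ
  have := hχ.isIrreducible (ρ := ρ) rfl
  exact ⟨_, ρ.char_one, finrank_dvd_card_of_isIrreducible ρ⟩

theorem coprime_card_index_subgroupOf_sup {G : Type*} [Group G] {p : ℕ} (hp : p.Prime)
    {N P : Subgroup G} [N.Normal] [Finite P] (hN : ¬ p ∣ Nat.card N) (hP : IsPGroup p P) :
    (Nat.card N).Coprime (N.subgroupOf (N ⊔ P)).index := by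
  have : Fact p.Prime := ⟨hp⟩
  obtain ⟨m, hm⟩ := IsPGroup.iff_card.mp hP
  have hdvd : (N.subgroupOf (N ⊔ P)).index ∣ p ^ m := by
    rw [← hm, ← Subgroup.relIndex, Subgroup.relIndex_sup_left]
    exact Subgroup.relIndex_dvd_card N P
  exact ((hp.coprime_iff_not_dvd.mpr hN).symm.pow_right m).coprime_dvd_right hdvd

theorem canonical_extension_extends_general {G : Type} [Group G] [Fintype G] {N K : Subgroup G}
    (hNK : N ≤ K) [(N.subgroupOf K).Normal] {μ : N → ℂ} {μd : K → ℂ} (hμ : IsIrrChar N μ)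
    {n : ℕ} (hn : μ 1 = n) (hcop : n.Coprime (N.subgroupOf K).index)
    (hμd : IsCanonicalExtensionOn K N hNK μ μd) :
    (∃ χ : G → ℂ, IsChar G χ ∧ ∀ x : N, χ x = μ x) ↔
      ∃ χ : G → ℂ, IsChar G χ ∧ ∀ x : K, χ x = μd x := by
  obtain ⟨hext, m, ρ, hρ, hdet⟩ := hμd
  constructor
  · rintro ⟨χ, ⟨l, σ, hσ⟩, hσμ⟩
    let i := Subgroup.inclusion hNK
    let σK : Representation ℂ K (Fin l → ℂ) := σ.comp K.subtype
    have hσN : character (σK.comp i) = μ := funext fun x ↦ (hσ x).symm.trans (hσμ x)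
    have hρN : character (ρ.comp i) = μ := funext fun x ↦ (hρ (i x)).symm.trans (hext x)
    have := hμ.isIrreducible hσN
    have := hμ.isIrreducible hρN
    obtain ⟨φ⟩ := nonempty_equiv_of_character_eq (hσN.trans hρN.symm)
    have hdim : finrank ℂ (Fin l → ℂ) = n := by
      have := char_one (σK.comp i)
      rw [hσN, hn] at this
      exact_mod_cast this.symm
    have hi : i.range = N.subgroupOf K := Subgroup.inclusion_range hNK
    have : i.range.Normal := by rw [hi]; infer_instance
    rw [← hi] at hcop hdet
    rw [← orderOf_detChar] at hdet
    rw [← hdim] at hcop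
    obtain ⟨τ, ⟨ψ⟩⟩ := exists_comp_equiv_of_equiv_comp_comp φ hcop hdet
    exact ⟨τ.character, ⟨l, τ, fun _ ↦ rfl⟩, fun x ↦ (congr_fun (char_iso ψ) x).trans (hρ x).symm⟩
  · rintro ⟨χ, hχ, hχμ⟩
    exact ⟨χ, hχ, fun x ↦ (hχμ ⟨x, hNK x.2⟩).trans (hext x)⟩

end Characters

/-- `N ⊴ G` a `p'`-group, `P` a `p`-subgroup with `K = NP ⊴ G`,
`μ ∈ Irr(N)` `G`-invariant with canonical extension `μ^◇` to `K`.  Then `μ`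
extends to `G` if and only if `μ^◇` extends to `G`. -/
theorem canonical_extension_extends {G : Type} [Group G] [Fintype G]
    (p : ℕ) (hp : p.Prime) (N P : Subgroup G) (hN : N.Normal)
    (hN' : ¬ p ∣ Fintype.card ↥N) (hP : IsPGroup p P)
    (hK : (N ⊔ P).Normal)
    (μ : ↥N → ℂ) (hμ : IsIrrChar ↥N μ) (hinv : Invariant N μ)
    (μd : ↥(N ⊔ P) → ℂ) (hμd : IsCanonicalExtensionOn (N ⊔ P) N le_sup_left μ μd) :
    (∃ χ : G → ℂ, IsChar G χ ∧ ∀ x : ↥N, χ x.1 = μ x) ↔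
      (∃ χ : G → ℂ, IsChar G χ ∧ ∀ x : ↥(N ⊔ P), χ x.1 = μd x) := by
  obtain ⟨n, hn, hdvd⟩ := hμ.exists_apply_one_eq_natCast_dvd_card
  rw [← Nat.card_eq_fintype_card] at hN'
  have hcop := (coprime_card_index_subgroupOf_sup hp hN' hP).coprime_dvd_left hdvd
  exact canonical_extension_extends_general le_sup_left hμ hn hcop hμd

end CTC
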